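/- arXiv:1304.2254 — 3 statements merged into one kernel-verified Lean document; each statement's English description precedes it below -/
import Mathlib

section
/- Let q be a power of 2 and k ≥ 1 an integer. Define L : F_{q^{3k}} → F_{q^{3k}} by L(x) = (x + S_{2k}(x)^{q^{2k}})^{4 q^{3k-1}}. Then L maps the subfield F_{q^k} bijectively onto itself, and L(x) + L(x)^{q^{2k}} = S_{2k}(x)^4 for all x ∈ F_{q^{3k}}. -/
/-- `S2k q k x = x + x^q + x^(q^2) + ⋯ + x^(q^(2k-1))`. -/
def S2k (q k : ℕ) {F : Type*} [Field F] (x : F) : F :=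
  ∑ i ∈ Finset.range (2 * k), x ^ q ^ i

/-!
Write `Q = q ^ k`, `T = x + x ^ q + ⋯ + x ^ q ^ (k - 1)` and `S = S_{2k}(x) = T + T ^ Q`. In
characteristic two `S` vanishes on the subfield `x ^ Q = x`, so there `L` is a power of the
Frobenius, which permutes its own periodic points. For the identity, let `y = x + S ^ Q ^ 2`. Since
`T ^ Q ^ 3 = T`, the terms `T ^ Q ^ 2` cancel in
`S ^ Q ^ 2 + S ^ Q ^ 4 = (T ^ Q ^ 2 + T) + (T ^ Q + T ^ Q ^ 2)`, which leaves `S`, while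
telescoping gives `x + x ^ Q ^ 2 = S + S ^ q`. Hence `y + y ^ Q ^ 2 = S ^ q`, and raising this to
the power `4 * q ^ (3 * k - 1)` yields `S ^ (4 * q ^ (3 * k)) = S ^ 4`.
-/

theorem bijOn_pow_pow_of_pow_pow_eq_self {M : Type*} [Monoid M] (a m : ℕ) {n : ℕ} (hn : 0 < n) :
    Set.BijOn (fun x : M => x ^ a ^ m) {x | x ^ a ^ n = x} {x | x ^ a ^ n = x} := by
  have periodic : Function.ptsOfPeriod (fun x : M => x ^ a) n = {x | x ^ a ^ n = x} := by
    ext x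
    simp only [Function.mem_ptsOfPeriod, Function.IsPeriodicPt, Function.IsFixedPt, pow_iterate,
      Set.mem_ofPred_eq]
  simpa only [periodic, pow_iterate] using
    (Function.bijOn_ptsOfPeriod (fun x : M => x ^ a) hn).iterate m

/-- The partial trace `x + x ^ q + ⋯ + x ^ q ^ (n - 1)`; on a field with `q ^ n` elements it is the
trace to the subfield with `q` elements. The map `S2k q k` is the case of `2 * k` terms. -/
def partialTrace {R : Type*} [Semiring R] (q n : ℕ) (x : R) : R :=
  ∑ i ∈ Finset.range n, x ^ q ^ i

/-- The map `x ↦ x + S_{2k}(x) ^ q ^ (2 * k)`, of which `L` is a Frobenius power. -/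
def traceTwist {R : Type*} [Semiring R] (q k : ℕ) (x : R) : R :=
  x + partialTrace q (2 * k) x ^ q ^ (2 * k)

section Semiring

variable {R : Type*} [Semiring R]

theorem partialTrace_one (q : ℕ) (x : R) : partialTrace q 1 x = x := by
  simp [partialTrace]

theorem partialTrace_add (q m n : ℕ) (x : R) :
    partialTrace q (m + n) x = partialTrace q m x + partialTrace q n (x ^ q ^ m) := by
  simp only [partialTrace, Finset.sum_range_add, ← pow_mul, ← pow_add]

theorem partialTrace_two_mul_eq_zero [CharP R 2] {q k : ℕ} {x : R} (hx : x ^ q ^ k = x) :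
    partialTrace q (2 * k) x = 0 := by
  rw [two_mul, partialTrace_add, hx, CharTwo.add_self_eq_zero]

theorem traceTwist_eq_self [CharP R 2] {q k : ℕ} {x : R} (hq : q ≠ 0) (hx : x ^ q ^ k = x) :
    traceTwist q k x = x := by
  rw [traceTwist, partialTrace_two_mul_eq_zero hx, zero_pow (pow_ne_zero _ hq), add_zero]

end Semiring

section ExpChar

variable {R : Type*} [CommSemiring R] (p : ℕ) [ExpChar R p]

theorem partialTrace_pow_expChar_pow (q n j : ℕ) (x : R) :
    partialTrace q n x ^ p ^ j = partialTrace q n (x ^ p ^ j) := by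
  simp only [partialTrace, ← iterateFrobenius_def, map_sum, map_pow]

theorem partialTrace_two_mul (e k : ℕ) (x : R) :
    partialTrace (p ^ e) (2 * k) x =
      partialTrace (p ^ e) k x + partialTrace (p ^ e) k x ^ (p ^ e) ^ k := by
  rw [two_mul, partialTrace_add, ← pow_mul p, partialTrace_pow_expChar_pow]

theorem add_partialTrace_pow (e n : ℕ) (x : R) :
    x + partialTrace (p ^ e) n x ^ p ^ e = partialTrace (p ^ e) n x + x ^ (p ^ e) ^ n := by
  calc x + partialTrace (p ^ e) n x ^ p ^ e
      = partialTrace (p ^ e) (1 + n) x := by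
        rw [partialTrace_add, partialTrace_one, pow_one, partialTrace_pow_expChar_pow]
    _ = partialTrace (p ^ e) n x + x ^ (p ^ e) ^ n := by
        rw [add_comm 1 n, partialTrace_add, partialTrace_one]

end ExpChar

section CharTwo

variable {R : Type*} [CommRing R] [CharP R 2]

theorem add_pow_pow_sq_add_pow_pow_sq {n : ℕ} {t : R} (ht : t ^ (2 ^ n) ^ 3 = t) :
    (t + t ^ 2 ^ n) ^ (2 ^ n) ^ 2 + ((t + t ^ 2 ^ n) ^ (2 ^ n) ^ 2) ^ (2 ^ n) ^ 2 =
      t + t ^ 2 ^ n := by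
  have frobenius_add (a b : R) : (a + b) ^ (2 ^ n) ^ 2 = a ^ (2 ^ n) ^ 2 + b ^ (2 ^ n) ^ 2 := by
    rw [← pow_mul 2, add_pow_char_pow]
  have pow_sq : (t + t ^ 2 ^ n) ^ (2 ^ n) ^ 2 = t ^ (2 ^ n) ^ 2 + t := by
    rw [frobenius_add, ← pow_mul t, ← pow_succ', ht]
  have pow_sq_pow_sq : (t ^ (2 ^ n) ^ 2 + t) ^ (2 ^ n) ^ 2 = t ^ 2 ^ n + t ^ (2 ^ n) ^ 2 := by
    rw [frobenius_add, ← pow_mul t, ← pow_add, pow_succ _ 3, pow_mul t, ht]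
  rw [pow_sq, pow_sq_pow_sq]
  linear_combination CharTwo.add_self_eq_zero (t ^ (2 ^ n) ^ 2)

variable {e k : ℕ} {x : R}

theorem partialTrace_pow_add_pow_pow (hx : x ^ (2 ^ e) ^ (3 * k) = x) :
    partialTrace (2 ^ e) (2 * k) x ^ (2 ^ e) ^ (2 * k) +
        (partialTrace (2 ^ e) (2 * k) x ^ (2 ^ e) ^ (2 * k)) ^ (2 ^ e) ^ (2 * k) =
      partialTrace (2 ^ e) (2 * k) x := by
  have ht : partialTrace (2 ^ e) k x ^ (2 ^ (e * k)) ^ 3 = partialTrace (2 ^ e) k x := by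
    rw [← pow_mul, partialTrace_pow_expChar_pow, mul_assoc, mul_comm k, pow_mul, hx]
  rw [partialTrace_two_mul, mul_comm 2 k, pow_mul (2 ^ e) k, ← pow_mul 2 e k]
  exact add_pow_pow_sq_add_pow_pow_sq ht

theorem traceTwist_add_pow (hx : x ^ (2 ^ e) ^ (3 * k) = x) :
    traceTwist (2 ^ e) k x + traceTwist (2 ^ e) k x ^ (2 ^ e) ^ (2 * k) =
      partialTrace (2 ^ e) (2 * k) x ^ 2 ^ e := by
  have frobenius_add (a b : R) :
      (a + b) ^ (2 ^ e) ^ (2 * k) = a ^ (2 ^ e) ^ (2 * k) + b ^ (2 ^ e) ^ (2 * k) := by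
    rw [← pow_mul 2, add_pow_char_pow]
  rw [traceTwist, frobenius_add]
  linear_combination partialTrace_pow_add_pow_pow hx - add_partialTrace_pow 2 e (2 * k) x +
    CharTwo.add_self_eq_zero x

theorem traceTwist_pow_add_pow (m : ℕ) (hk : 0 < k) (hx : x ^ (2 ^ e) ^ (3 * k) = x) :
    traceTwist (2 ^ e) k x ^ (2 ^ m * (2 ^ e) ^ (3 * k - 1)) +
        (traceTwist (2 ^ e) k x ^ (2 ^ m * (2 ^ e) ^ (3 * k - 1))) ^ (2 ^ e) ^ (2 * k) =
      partialTrace (2 ^ e) (2 * k) x ^ 2 ^ m := by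
  set y := traceTwist (2 ^ e) k x
  set s := partialTrace (2 ^ e) (2 * k) x with hs
  have s_fixed : s ^ (2 ^ e) ^ (3 * k) = s := by
    rw [hs, ← pow_mul 2, partialTrace_pow_expChar_pow, pow_mul, hx]
  have frobenius_add (a b : R) : (a + b) ^ (2 ^ m * (2 ^ e) ^ (3 * k - 1)) =
      a ^ (2 ^ m * (2 ^ e) ^ (3 * k - 1)) + b ^ (2 ^ m * (2 ^ e) ^ (3 * k - 1)) := by
    rw [← pow_mul 2, ← pow_add, add_pow_char_pow]
  calc y ^ (2 ^ m * (2 ^ e) ^ (3 * k - 1)) +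
          (y ^ (2 ^ m * (2 ^ e) ^ (3 * k - 1))) ^ (2 ^ e) ^ (2 * k)
      = (y + y ^ (2 ^ e) ^ (2 * k)) ^ (2 ^ m * (2 ^ e) ^ (3 * k - 1)) := by
        rw [frobenius_add, pow_right_comm y]
    _ = (s ^ 2 ^ e) ^ (2 ^ m * (2 ^ e) ^ (3 * k - 1)) := by
        rw [traceTwist_add_pow hx]
    _ = (s ^ (2 ^ e) ^ (3 * k)) ^ 2 ^ m := by
        rw [← pow_mul s, ← pow_mul s, mul_left_comm, mul_pow_sub_one (by lia), mul_comm]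
    _ = s ^ 2 ^ m := by rw [s_fixed]

theorem bijOn_traceTwist_pow (m : ℕ) (he : 0 < e) (hk : 0 < k) :
    Set.BijOn (fun x : R => traceTwist (2 ^ e) k x ^ 2 ^ m)
      {x | x ^ (2 ^ e) ^ k = x} {x | x ^ (2 ^ e) ^ k = x} := by
  have bijOn_frobenius : Set.BijOn (fun x : R => x ^ 2 ^ m)
      {x | x ^ (2 ^ e) ^ k = x} {x | x ^ (2 ^ e) ^ k = x} := by
    simpa only [pow_mul] using bijOn_pow_pow_of_pow_pow_eq_self 2 m (Nat.mul_pos he hk)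
  refine bijOn_frobenius.congr fun x hx => ?_
  rw [traceTwist_eq_self (by positivity) hx]

end CharTwo

theorem stmt_2_general (q e k : ℕ) (he : 0 < e) (hq : q = 2 ^ e) (hk : 0 < k)
    (R : Type*) [CommRing R] [CharP R 2] :
    Set.BijOn (fun x : R => (x + partialTrace q (2 * k) x ^ q ^ (2 * k)) ^ (4 * q ^ (3 * k - 1)))
      {x : R | x ^ q ^ k = x} {x : R | x ^ q ^ k = x} ∧
    ∀ x : R, x ^ q ^ (3 * k) = x →
      (x + partialTrace q (2 * k) x ^ q ^ (2 * k)) ^ (4 * q ^ (3 * k - 1)) +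
        ((x + partialTrace q (2 * k) x ^ q ^ (2 * k)) ^ (4 * q ^ (3 * k - 1))) ^ q ^ (2 * k)
      = partialTrace q (2 * k) x ^ 4 := by
  subst hq
  have exponent : 4 * (2 ^ e) ^ (3 * k - 1) = 2 ^ (2 + e * (3 * k - 1)) := by
    rw [pow_add, pow_mul]; norm_num
  refine ⟨?_, fun _ hx => traceTwist_pow_add_pow 2 hk hx⟩
  rw [exponent]
  exact bijOn_traceTwist_pow _ he hk

/-- Let `q` be a power of 2 and `k ≥ 1`, and `L(x) = (x + S_{2k}(x)^{q^{2k}})^{4 q^{3k-1}}`.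
Then `L` maps the subfield `F_{q^k}` bijectively onto itself, and
`L(x) + L(x)^{q^{2k}} = S_{2k}(x)^4` for all `x ∈ F_{q^{3k}}`. -/
theorem stmt_2 (q e k : ℕ) (he : 0 < e) (hq : q = 2 ^ e) (hk : 0 < k)
    (F : Type*) [Field F] [Fintype F] (hF : Fintype.card F = q ^ (3 * k)) :
    Set.BijOn (fun x : F => (x + (S2k q k x) ^ q ^ (2 * k)) ^ (4 * q ^ (3 * k - 1)))
      {x : F | x ^ q ^ k = x} {x : F | x ^ q ^ k = x} ∧
    ∀ x : F,
      (x + (S2k q k x) ^ q ^ (2 * k)) ^ (4 * q ^ (3 * k - 1)) +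
        ((x + (S2k q k x) ^ q ^ (2 * k)) ^ (4 * q ^ (3 * k - 1))) ^ q ^ (2 * k)
      = (S2k q k x) ^ 4 := by
  have : CharP F 2 := charP_of_card_eq_prime_pow (f := e * (3 * k)) (by rw [hF, hq, ← pow_mul])
  obtain ⟨bijOn, identity⟩ := stmt_2_general q e k he hq hk F
  exact ⟨bijOn, fun x => identity x (hF ▸ FiniteField.pow_card x)⟩
end

section
/- Let q be a power of 2 and k ≥ 1 an integer. Let L : F_{q^{3k}} → F_{q^{3k}} be an additive map satisfying L(x) + L(x)^{q^{2k}} = S_{2k}(x)^4 for all x ∈ F_{q^{3k}}, and set g(x) = L(x) + S_{2k}(x)^{q^k+3}. Then for every c ∈ F_{q^{3k}} and every x ∈ F_{q^{3k}}, Tr((c + c^{q^k}) · g(x)) = Tr(c · S_{2k}(x)^{1 + 2q^k + q^{2k}}), where Tr = Tr_{q^{3k}/2} is the absolute trace to F_2. -/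
/-- The absolute trace to `F_2` of a field with `2^m` elements:
`Tr(x) = x + x^2 + x^4 + ⋯ + x^{2^{m-1}}`. -/
def absTr (m : ℕ) {F : Type*} [Field F] (x : F) : F :=
  ∑ i ∈ Finset.range m, x ^ 2 ^ i

/-! Write `Q = q ^ k`. The elements `S2k q k x` have trace zero over the subfield with `Q` elements,
because `S2k q k x = u + u ^ Q` for the shorter sum `u = x + x ^ q + ⋯ + x ^ q ^ (k - 1)`. As the
trace is Frobenius-invariant, `c ↦ c ^ Q` is adjoint to `y ↦ y ^ Q ^ 2`, so the left-hand side is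
`Tr (c * (g + g ^ Q ^ 2))`. Finally, with `a = S2k q k x`, `b = a ^ Q` and `d = a ^ Q ^ 2`, the
element `g + g ^ Q ^ 2` is `a ^ 4 + a ^ 3 * b + a * d ^ 3`, which equals `a * b ^ 2 * d` because
`d = a + b`. -/

section Trace

variable {F : Type*} [Field F] {m : ℕ}

lemma absTr_add [CharP F 2] (x y : F) : absTr m (x + y) = absTr m x + absTr m y := by
  simp only [absTr, add_pow_char_pow, Finset.sum_add_distrib]

lemma absTr_sq {x : F} (hx : x ^ 2 ^ m = x) : absTr m (x ^ 2) = absTr m x := by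
  have shift := (Finset.sum_range_succ' (x ^ 2 ^ ·) m).symm.trans (Finset.sum_range_succ _ m)
  rw [pow_zero, pow_one, hx] at shift
  simpa only [absTr, ← pow_mul, ← pow_succ'] using add_right_cancel shift

lemma absTr_pow_two_pow {x : F} (hx : x ^ 2 ^ m = x) (n : ℕ) :
    absTr m (x ^ 2 ^ n) = absTr m x := by
  induction n with
  | zero => rw [pow_zero, pow_one]
  | succ n ih =>
    have hxn : (x ^ 2 ^ n) ^ 2 ^ m = x ^ 2 ^ n := by rw [pow_right_comm, hx]
    rw [pow_succ, pow_mul, absTr_sq hxn, ih]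

lemma absTr_pow_two_pow_mul {i j : ℕ} (hij : i + j = m) {c y : F} (hc : c ^ 2 ^ m = c)
    (hy : y ^ 2 ^ m = y) : absTr m (c ^ 2 ^ i * y) = absTr m (c * y ^ 2 ^ j) := by
  have hcy : (c ^ 2 ^ i * y) ^ 2 ^ m = c ^ 2 ^ i * y := by rw [mul_pow, pow_right_comm, hc, hy]
  rw [← absTr_pow_two_pow hcy j, mul_pow, ← pow_mul, ← pow_add, hij, hc]

lemma absTr_add_pow_two_pow_mul [CharP F 2] {i j : ℕ} (hij : i + j = m) {c y : F}
    (hc : c ^ 2 ^ m = c) (hy : y ^ 2 ^ m = y) :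
    absTr m ((c + c ^ 2 ^ i) * y) = absTr m (c * (y + y ^ 2 ^ j)) := by
  rw [add_mul, mul_add, absTr_add, absTr_add, absTr_pow_two_pow_mul hij hc hy]

end Trace

section CharTwo

variable {R : Type*} [CommRing R] [CharP R 2]

lemma add_pow_conjugates_sum_eq_zero {n : ℕ} {u : R} (hu : u ^ (2 ^ n) ^ 3 = u) :
    u + u ^ 2 ^ n + (u + u ^ 2 ^ n) ^ 2 ^ n + (u + u ^ 2 ^ n) ^ (2 ^ n) ^ 2 = 0 := by
  have conj_sq (z : R) : z ^ (2 ^ n) ^ 2 = (z ^ 2 ^ n) ^ 2 ^ n := by rw [sq, pow_mul]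
  have hu' : ((u ^ 2 ^ n) ^ 2 ^ n) ^ 2 ^ n = u := by rwa [← conj_sq, ← pow_mul, ← pow_succ']
  simp only [conj_sq, add_pow_char_pow, hu']
  linear_combination (u + u ^ 2 ^ n + (u ^ 2 ^ n) ^ 2 ^ n) * CharTwo.two_eq_zero (R := R)

lemma pow_four_add_pow_three_mul_add_mul_pow_three {a b d : R} (h : a + b + d = 0) :
    a ^ 4 + a ^ 3 * b + a * d ^ 3 = a * b ^ 2 * d := by
  obtain rfl : a + b = d := CharTwo.add_eq_zero.mp h
  linear_combination (a ^ 4 + 2 * a ^ 3 * b + a ^ 2 * b ^ 2) * CharTwo.two_eq_zero (R := R)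

lemma add_pow_add_conjugate_eq_pow {n : ℕ} {a y : R}
    (ha : a ^ (2 ^ n) ^ 3 = a) (htr : a + a ^ 2 ^ n + a ^ (2 ^ n) ^ 2 = 0)
    (hy : y + y ^ (2 ^ n) ^ 2 = a ^ 4) :
    y + a ^ (2 ^ n + 3) + (y + a ^ (2 ^ n + 3)) ^ (2 ^ n) ^ 2
      = a ^ (1 + 2 * 2 ^ n + (2 ^ n) ^ 2) := by
  have conj_add (z w : R) : (z + w) ^ (2 ^ n) ^ 2 = z ^ (2 ^ n) ^ 2 + w ^ (2 ^ n) ^ 2 := by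
    rw [← pow_mul, add_pow_char_pow]
  have conj_monomial : (a ^ (2 ^ n + 3)) ^ (2 ^ n) ^ 2 = a * (a ^ (2 ^ n) ^ 2) ^ 3 := by
    rw [pow_add, mul_pow, ← pow_mul, ← pow_succ', ha, pow_right_comm]
  calc
    y + a ^ (2 ^ n + 3) + (y + a ^ (2 ^ n + 3)) ^ (2 ^ n) ^ 2
      = y + y ^ (2 ^ n) ^ 2 + a ^ 3 * a ^ 2 ^ n + a * (a ^ (2 ^ n) ^ 2) ^ 3 := by
        rw [conj_add, conj_monomial]; ring
    _ = a * (a ^ 2 ^ n) ^ 2 * a ^ (2 ^ n) ^ 2 := by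
        rw [hy, pow_four_add_pow_three_mul_add_mul_pow_three htr]
    _ = a ^ (1 + 2 * 2 ^ n + (2 ^ n) ^ 2) := by
        rw [pow_add, pow_add, pow_one, pow_mul']

end CharTwo

lemma S2k_eq_add_pow {F : Type*} [Field F] (p e k : ℕ) [ExpChar F p] (x : F) :
    S2k (p ^ e) k x = ∑ i ∈ Finset.range k, x ^ (p ^ e) ^ i +
      (∑ i ∈ Finset.range k, x ^ (p ^ e) ^ i) ^ (p ^ e) ^ k := by
  rw [S2k, two_mul, Finset.sum_range_add, ← pow_mul p e k, sum_pow_char_pow]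
  simp only [pow_mul, ← pow_mul x, ← pow_add, add_comm k]

lemma S2k_conjugates_sum_eq_zero {q e k : ℕ} (hq : q = 2 ^ e) {F : Type*} [Field F] [Fintype F]
    (hF : Fintype.card F = (q ^ k) ^ 3) (x : F) :
    S2k q k x + S2k q k x ^ q ^ k + S2k q k x ^ (q ^ k) ^ 2 = 0 := by
  have hcard : Fintype.card F = (2 ^ (e * k)) ^ 3 := by rw [hF, hq, pow_mul]
  have : CharP F 2 := charP_of_card_eq_prime_pow (hcard.trans (pow_mul 2 _ 3).symm)
  rw [hq, S2k_eq_add_pow 2 e k x, ← pow_mul 2 e k]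
  exact add_pow_conjugates_sum_eq_zero (hcard ▸ FiniteField.pow_card _)

theorem stmt_9_general {q n : ℕ} (hq : q = 2 ^ n) {F : Type*} [Field F] [Fintype F]
    (hF : Fintype.card F = q ^ 3) {a y : F} (htr : a + a ^ q + a ^ q ^ 2 = 0)
    (hy : y + y ^ q ^ 2 = a ^ 4) (c : F) :
    absTr (3 * n) ((c + c ^ q) * (y + a ^ (q + 3)))
      = absTr (3 * n) (c * a ^ (1 + 2 * q + q ^ 2)) := by
  subst hq
  have hcard : Fintype.card F = 2 ^ (3 * n) := by rw [hF, pow_mul']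
  have : CharP F 2 := charP_of_card_eq_prime_pow hcard
  have frob (z : F) : z ^ 2 ^ (3 * n) = z := hcard ▸ FiniteField.pow_card z
  rw [absTr_add_pow_two_pow_mul (j := 2 * n) (by ring) (frob c) (frob _), pow_mul' 2 2 n,
    add_pow_add_conjugate_eq_pow (hF ▸ FiniteField.pow_card a) htr hy]

/-- Let `q = 2^e` and `k ≥ 1` (so `F_{q^{3k}}` has `2^{3ke}` elements). Let `L` be
additive with `L(x) + L(x)^{q^{2k}} = S_{2k}(x)^4` for all `x`, and
`g(x) = L(x) + S_{2k}(x)^{q^k+3}`. Then for all `c, x ∈ F_{q^{3k}}`,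
`Tr((c + c^{q^k})·g(x)) = Tr(c·S_{2k}(x)^{1+2q^k+q^{2k}})`, `Tr = Tr_{q^{3k}/2}`. -/
theorem stmt_9 (q e k : ℕ) (he : 0 < e) (hq : q = 2 ^ e) (hk : 0 < k)
    (F : Type*) [Field F] [Fintype F] (hF : Fintype.card F = q ^ (3 * k))
    (L : F → F) (hLadd : ∀ x y : F, L (x + y) = L x + L y)
    (hLid : ∀ x : F, L x + (L x) ^ q ^ (2 * k) = (S2k q k x) ^ 4)
    (c x : F) :
    absTr (3 * k * e) ((c + c ^ q ^ k) * (L x + (S2k q k x) ^ (q ^ k + 3)))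
      = absTr (3 * k * e) (c * (S2k q k x) ^ (1 + 2 * q ^ k + q ^ (2 * k))) := by
  simp only [pow_mul' _ _ k, mul_assoc] at hF hLid ⊢
  exact stmt_9_general (by rw [hq, pow_mul']) hF (S2k_conjugates_sum_eq_zero hq hF x) (hLid x) c
end

section
/- Let q be a power of 2 and k ≥ 1 an integer. Let T_0 = {x ∈ F_{q^{3k}} : x + x^{q^k} + x^{q^{2k}} = 0}. Then for every c ∈ F_{q^{3k}} with c ∉ F_{q^k}, Σ_{x ∈ T_0} (−1)^{Tr(c · x^{1 + 2q^k + q^{2k}})} = 0, where Tr = Tr_{q^{3k}/2} is the absolute trace to F_2. -/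
/-- `(-1)^a` for `a ∈ F_2 ⊆ F`: `1` if `a = 0`, `-1` otherwise. -/
def chi {F : Type*} [Field F] [DecidableEq F] (a : F) : ℤ :=
  if a = 0 then 1 else -1

/-!
Write `Q = q ^ k` and `N x = x ^ (1 + Q + Q ^ 2)`, the norm to the field with `Q` elements, so that
the exponent in question gives `x ^ (1 + 2 * Q + Q ^ 2) = N x * x ^ Q`. As `N x` is fixed by
`x ↦ x ^ Q`, this power map preserves `T₀`. It is also injective: modulo `Q - 1` the exponent is
`4`, which is coprime to the odd number `Q - 1`, and modulo `1 + Q + Q ^ 2` it is `Q`. Hence it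
permutes `T₀`, and the sum equals `∑ x ∈ T₀, (-1) ^ Tr (c * x)`, the sum of an additive character
over the group `T₀`. If this character were trivial, evaluating it at `y - y ^ Q ∈ T₀` would give
`Tr (c * y ^ Q) = Tr (c * y) = Tr (c ^ Q * y ^ Q)` for all `y`, and therefore `c ^ Q = c`. The
argument works in any degree `n` such that `n + 1` is coprime to `Q - 1`.
-/

open Finset

theorem coprime_add_geom_sum {Q n : ℕ} (hQ : 1 ≤ Q) (hn : n ≠ 0)
    (hcop : (n + 1).Coprime (Q - 1)) :
    (Q + ∑ i ∈ range n, Q ^ i).Coprime (Q ^ n - 1) := by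
  have coprime_geom_sum : (Q + ∑ i ∈ range n, Q ^ i).Coprime (∑ i ∈ range n, Q ^ i) := by
    obtain ⟨m, rfl⟩ := Nat.exists_eq_succ_of_ne_zero hn
    rw [Nat.coprime_add_self_left, geom_sum_succ, Nat.coprime_mul_left_add_right]
    simp
  have modEq_succ : Q + ∑ i ∈ range n, Q ^ i ≡ n + 1 [MOD Q - 1] := by
    have hQ_one : Q ≡ 1 [MOD Q - 1] := ((Nat.modEq_iff_dvd' hQ).mpr dvd_rfl).symm
    have hgeom : ∑ i ∈ range n, Q ^ i ≡ n [MOD Q - 1] := by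
      simpa using Nat.ModEq.sum fun i (_ : i ∈ range n) => hQ_one.pow i
    simpa [add_comm] using hQ_one.add hgeom
  have coprime_pred : (Q + ∑ i ∈ range n, Q ^ i).Coprime (Q - 1) :=
    modEq_succ.gcd_eq.trans hcop
  rw [← geom_sum_mul_of_one_le hQ n]
  exact coprime_geom_sum.mul_right coprime_pred

theorem pow_left_injective_of_coprime_card_sub_one {F : Type*} [Field F] [Fintype F] {m : ℕ}
    (hm : m ≠ 0) (hcop : m.Coprime (Fintype.card F - 1)) :
    Function.Injective fun x : F => x ^ m := by
  intro x y (hxy : x ^ m = y ^ m)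
  rcases eq_or_ne y 0 with rfl | hy
  · simpa [hm] using hxy
  have hx : x ≠ 0 := by
    rintro rfl
    exact pow_ne_zero m hy (by simpa [hm] using hxy.symm)
  have hdiv : (x / y) ^ m.gcd (Fintype.card F - 1) = 1 :=
    pow_gcd_eq_one.mpr ⟨by rw [div_pow, hxy, div_self (pow_ne_zero m hy)],
      FiniteField.pow_card_sub_one_eq_one _ (div_ne_zero hx hy)⟩
  rw [hcop.gcd_eq_one, pow_one] at hdiv
  exact eq_of_div_eq_one hdiv

theorem pow_geom_sum_pow_eq_self {M : Type*} [Monoid M] {Q n : ℕ} {x : M} (hx : x ^ Q ^ n = x) :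
    (x ^ ∑ i ∈ range n, Q ^ i) ^ Q = x ^ ∑ i ∈ range n, Q ^ i := by
  cases n with
  | zero => simp
  | succ m =>
    calc (x ^ ∑ i ∈ range (m + 1), Q ^ i) ^ Q
        = x ^ (Q * ∑ i ∈ range m, Q ^ i) * x ^ Q ^ (m + 1) := by
          rw [← pow_mul, ← pow_add, geom_sum_succ']
          ring_nf
      _ = x ^ ∑ i ∈ range (m + 1), Q ^ i := by rw [hx, ← pow_succ, ← geom_sum_succ]

section FrobTrace

/-- The relative trace `x ↦ x + x ^ Q + ⋯ + x ^ Q ^ (n - 1)` from the field with `Q ^ n` elements to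
its subfield with `Q = p ^ j` elements, as an additive endomorphism of the large field, whose kernel
is the set `T₀`. The same formula defines an endomorphism of any ring of exponential characteristic
`p`. -/
def frobTrace (A : Type*) [CommRing A] (p : ℕ) [ExpChar A p] (j n : ℕ) : A →+ A :=
  AddMonoidHom.mk' (fun x => ∑ i ∈ range n, x ^ (p ^ j) ^ i) fun x y => by
    simp only [← pow_mul, add_pow_expChar_pow, sum_add_distrib]

variable {p j n : ℕ} {A : Type*} [CommRing A] [ExpChar A p]

theorem frobTrace_apply (x : A) : frobTrace A p j n x = ∑ i ∈ range n, x ^ (p ^ j) ^ i := rfl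

theorem frobTrace_pow (x : A) : frobTrace A p j n (x ^ p ^ j) = frobTrace A p j n x ^ p ^ j := by
  simp only [frobTrace_apply, sum_pow_char_pow, pow_right_comm]

theorem frobTrace_mul_of_pow_eq_self {a : A} (ha : a ^ p ^ j = a) (x : A) :
    frobTrace A p j n (a * x) = a * frobTrace A p j n x := by
  have ha_iterate (i : ℕ) : a ^ (p ^ j) ^ i = a := by
    induction i with
    | zero => simp
    | succ i ih => rw [pow_succ, pow_mul, ih, ha]
  simp only [frobTrace_apply, mul_pow, ha_iterate, mul_sum]

theorem frobTrace_self_sub_pow {x : A} (hx : x ^ (p ^ j) ^ n = x) :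
    frobTrace A p j n (x - x ^ p ^ j) = 0 := by
  calc frobTrace A p j n (x - x ^ p ^ j)
      = ∑ i ∈ range n, (x ^ (p ^ j) ^ i - x ^ (p ^ j) ^ (i + 1)) := by
        simp only [map_sub, frobTrace_apply, ← sum_sub_distrib, pow_succ', pow_mul]
    _ = 0 := by rw [sum_range_sub' fun i => x ^ (p ^ j) ^ i, hx, pow_zero, pow_one, sub_self]

theorem pow_mem_ker_frobTrace {x : A} (hx : x ^ (p ^ j) ^ n = x)
    (hmem : x ∈ (frobTrace A p j n).ker) :
    x ^ (p ^ j + ∑ i ∈ range n, (p ^ j) ^ i) ∈ (frobTrace A p j n).ker := by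
  rw [AddMonoidHom.mem_ker] at hmem ⊢
  rw [add_comm, pow_add, frobTrace_mul_of_pow_eq_self (pow_geom_sum_pow_eq_self hx), frobTrace_pow,
    hmem, zero_pow (expChar_pow_pos A p j).ne', mul_zero]

variable {F : Type*} [Field F] [ExpChar F p]

theorem exists_mem_ker_frobTrace_addChar_mul_ne_one [Finite F] {R : Type*} [CommRing R]
    {ψ : AddChar F R} (hψ : ψ ≠ 1) (hψ_pow : ∀ x, ψ (x ^ p ^ j) = ψ x)
    (hF : ∀ x : F, x ^ (p ^ j) ^ n = x) {c : F} (hc : c ^ p ^ j ≠ c) :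
    ∃ x ∈ (frobTrace F p j n).ker, ψ (c * x) ≠ 1 := by
  by_contra! htriv
  refine AddChar.IsPrimitive.of_ne_one hψ (sub_ne_zero.mpr hc) ?_
  ext z
  obtain ⟨y, rfl⟩ : ∃ y : F, y ^ p ^ j = z := (bijective_iterateFrobenius F p j).surjective z
  calc ψ ((c ^ p ^ j - c) * y ^ p ^ j)
      = ψ ((c * y) ^ p ^ j) * ψ (-(c * y ^ p ^ j)) := by
        rw [← AddChar.map_add_eq_mul, mul_pow, sub_mul, sub_eq_add_neg]
    _ = ψ (c * y) * ψ (-(c * y ^ p ^ j)) := by rw [hψ_pow]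
    _ = ψ (c * (y - y ^ p ^ j)) := by
        rw [← AddChar.map_add_eq_mul, mul_sub, sub_eq_add_neg]
    _ = 1 := htriv _ (frobTrace_self_sub_pow (hF y))

theorem sum_ker_frobTrace_comp_pow [Fintype F] [DecidableEq F] {M : Type*} [AddCommMonoid M]
    (hF : Fintype.card F = (p ^ j) ^ n) (hcop : (n + 1).Coprime (p ^ j - 1)) (f : F → M) :
    ∑ x : (frobTrace F p j n).ker, f (x ^ (p ^ j + ∑ i ∈ range n, (p ^ j) ^ i)) =
      ∑ x : (frobTrace F p j n).ker, f x := by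
  have hn : n ≠ 0 := by
    rintro rfl
    exact Fintype.one_lt_card.ne' hF
  have hQ : 0 < p ^ j := expChar_pow_pos F p j
  have hpow (x : F) : x ^ (p ^ j) ^ n = x := hF ▸ FiniteField.pow_card x
  have pow_injective : Function.Injective
      fun x : F => x ^ (p ^ j + ∑ i ∈ range n, (p ^ j) ^ i) :=
    pow_left_injective_of_coprime_card_sub_one (by omega)
      (hF ▸ coprime_add_geom_sum hQ hn hcop)
  let powKer (x : (frobTrace F p j n).ker) : (frobTrace F p j n).ker :=
    ⟨x ^ (p ^ j + ∑ i ∈ range n, (p ^ j) ^ i), pow_mem_ker_frobTrace (hpow x) x.2⟩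
  have powKer_injective : Function.Injective powKer := fun x y hxy =>
    Subtype.ext (pow_injective (congrArg Subtype.val hxy))
  exact (Finite.injective_iff_bijective.mp powKer_injective).sum_comp fun x => f x

theorem stmt_12_general [Fintype F] [DecidableEq F] {R : Type*} [CommRing R] [IsDomain R]
    (hF : Fintype.card F = (p ^ j) ^ n) (hcop : (n + 1).Coprime (p ^ j - 1))
    {ψ : AddChar F R} (hψ : ψ ≠ 1) (hψ_pow : ∀ x, ψ (x ^ p ^ j) = ψ x)
    {c : F} (hc : c ^ p ^ j ≠ c) :
    ∑ x : F with ∑ i ∈ range n, x ^ (p ^ j) ^ i = 0,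
      ψ (c * x ^ (p ^ j + ∑ i ∈ range n, (p ^ j) ^ i)) = 0 := by
  have hpow (x : F) : x ^ (p ^ j) ^ n = x := hF ▸ FiniteField.pow_card x
  let ψ_ker : AddChar (frobTrace F p j n).ker R :=
    (ψ.mulShift c).compAddMonoidHom (frobTrace F p j n).ker.subtype
  have ψ_ker_ne_one : ψ_ker ≠ 1 := by
    obtain ⟨x, hx, hne⟩ := exists_mem_ker_frobTrace_addChar_mul_ne_one hψ hψ_pow hpow hc
    exact AddChar.ne_one_iff.mpr ⟨⟨x, hx⟩, hne⟩
  calc ∑ x : F with ∑ i ∈ range n, x ^ (p ^ j) ^ i = 0,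
        ψ (c * x ^ (p ^ j + ∑ i ∈ range n, (p ^ j) ^ i))
      = ∑ x : (frobTrace F p j n).ker, ψ (c * x ^ (p ^ j + ∑ i ∈ range n, (p ^ j) ^ i)) :=
        sum_subtype _ (fun x => by simp [AddMonoidHom.mem_ker, frobTrace_apply]) _
    _ = ∑ x : (frobTrace F p j n).ker, ψ_ker x :=
        sum_ker_frobTrace_comp_pow hF hcop fun x => ψ (c * x)
    _ = 0 := AddChar.sum_eq_zero_of_ne_one ψ_ker_ne_one

end FrobTrace

theorem trace_pow_card_pow (K : Type*) {L : Type*} [Field K] [Fintype K] [Field L] [Algebra K L]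
    [Algebra.IsAlgebraic K L] (j : ℕ) (x : L) :
    Algebra.trace K L (x ^ Fintype.card K ^ j) = Algebra.trace K L x := by
  rw [← Algebra.trace_eq_of_algEquiv (FiniteField.frobeniusAlgEquivOfAlgebraic K L ^ j) x]
  simp [AlgEquiv.coe_pow, FiniteField.coe_frobeniusAlgEquivOfAlgebraic_iterate]

section TraceSign

variable {F : Type*} [Field F] [Algebra (ZMod 2) F]

/-- The additive character `x ↦ (-1) ^ Tr x` of a finite field of characteristic two, where `Tr` is
the absolute trace. -/
noncomputable def traceSign (F : Type*) [Field F] [Algebra (ZMod 2) F] : AddChar F ℤ :=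
  (AddChar.zmodChar 2 (ζ := (-1 : ℤ)) (by norm_num)).compAddMonoidHom
    (Algebra.trace (ZMod 2) F).toAddMonoidHom

theorem traceSign_ne_one [Finite F] : traceSign F ≠ 1 := by
  obtain ⟨x, hx⟩ := Algebra.trace_surjective (ZMod 2) F 1
  refine AddChar.ne_one_iff.mpr ⟨x, ?_⟩
  simp [traceSign, hx, AddChar.zmodChar_apply, ZMod.val_one]

theorem traceSign_pow_two_pow [Finite F] (j : ℕ) (x : F) :
    traceSign F (x ^ 2 ^ j) = traceSign F x := by
  have htrace := trace_pow_card_pow (ZMod 2) j x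
  rw [ZMod.card] at htrace
  simp [traceSign, htrace]

theorem chi_algebraMap [DecidableEq F] (a : ZMod 2) :
    chi (algebraMap (ZMod 2) F a) = AddChar.zmodChar 2 (ζ := (-1 : ℤ)) (by norm_num) a := by
  simp only [chi, map_eq_zero_iff _ (algebraMap (ZMod 2) F).injective]
  revert a
  decide

theorem absTr_eq_algebraMap_trace [Fintype F] {m : ℕ} (hF : Fintype.card F = 2 ^ m) (x : F) :
    absTr m x = algebraMap (ZMod 2) F (Algebra.trace (ZMod 2) F x) := by
  have hfinrank : Module.finrank (ZMod 2) F = m := by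
    refine Nat.pow_right_injective le_rfl (?_ : 2 ^ _ = 2 ^ m)
    rw [← hF, Module.card_eq_pow_finrank (K := ZMod 2), ZMod.card]
  rw [FiniteField.algebraMap_trace_eq_sum_pow, hfinrank, Nat.card_zmod, absTr]

theorem chi_absTr [Fintype F] [DecidableEq F] {m : ℕ} (hF : Fintype.card F = 2 ^ m) (x : F) :
    chi (absTr m x) = traceSign F x := by
  rw [absTr_eq_algebraMap_trace hF, chi_algebraMap]
  rfl

end TraceSign

/-- Let `q = 2^e` be a power of 2, `k ≥ 1`, and `T₀ = ker Tr_{q^{3k}/q^k}`.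
Then for every `c ∈ F_{q^{3k}} \ F_{q^k}`,
`Σ_{x ∈ T₀} (−1)^{Tr(c·x^{1+2q^k+q^{2k}})} = 0`, where `Tr = Tr_{q^{3k}/2}`. -/
theorem stmt_12 (q e k : ℕ) (he : 0 < e) (hq : q = 2 ^ e) (hk : 0 < k)
    (F : Type*) [Field F] [Fintype F] [DecidableEq F]
    (hF : Fintype.card F = q ^ (3 * k))
    (c : F) (hc : ¬ c ^ q ^ k = c) :
    ∑ x ∈ Finset.univ.filter (fun x : F => x + x ^ q ^ k + x ^ q ^ (2 * k) = 0),
        chi (absTr (3 * k * e) (c * x ^ (1 + 2 * q ^ k + q ^ (2 * k)))) = 0 := by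
  have hF_pow : Fintype.card F = (2 ^ (e * k)) ^ 3 := by rw [hF, hq, ← pow_mul, ← pow_mul]; ring_nf
  have hF_two : Fintype.card F = 2 ^ (3 * k * e) := by rw [hF_pow, ← pow_mul]; ring_nf
  have : CharP F 2 := charP_of_card_eq_prime_pow hF_two
  let : Algebra (ZMod 2) F := ZMod.algebra F 2
  have hcop : (3 + 1).Coprime (2 ^ (e * k) - 1) := by
    have hodd : Odd (2 ^ (e * k) - 1) :=
      Nat.Even.sub_odd Nat.one_le_two_pow (even_two.pow_of_ne_zero (by positivity)) odd_one
    exact (Nat.coprime_two_left.mpr hodd).pow_left 2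
  have hQ : q ^ k = 2 ^ (e * k) := by rw [hq, ← pow_mul]
  have hQ_sq : q ^ (2 * k) = (2 ^ (e * k)) ^ 2 := by rw [mul_comm, pow_mul, hQ]
  rw [hQ] at hc
  simp only [hQ, hQ_sq, chi_absTr hF_two]
  convert stmt_12_general hF_pow hcop traceSign_ne_one (traceSign_pow_two_pow (e * k)) hc using 5
  · simp [sum_range_succ]
  · simp only [sum_range_succ, sum_range_zero]
    ring
end
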